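/- Let H be a bounded operator on a Hilbert space and ε > 0. Then for every δ > 0 there exists τ > 0 with 0 < τ < ε such that the Hausdorff distance between Spec_{ε−τ}(H) and Spec_{ε+τ}(H) is at most δ. In other words, the map ε ↦ Spec_ε(H) is continuous in the Hausdorff metric. -/

import Mathlib

open Classical

variable {E : Type*} [NormedAddCommGroup E] [InnerProductSpace ℂ E] [CompleteSpace E]

/-- The lower norm function `ρ_H(λ) = ‖(H−λ)⁻¹‖⁻¹` off the spectrum, `0` on it. -/
noncomputable def lowerNorm (H : E →L[ℂ] E) (z : ℂ) : ℝ :=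
  if z ∈ spectrum ℂ H then 0
  else ‖Ring.inverse (algebraMap ℂ (E →L[ℂ] E) z - H)‖⁻¹

/-- The `ε`-pseudospectrum `Spec_ε(H) = {z | ρ_H(z) ≤ ε}`. -/
def pseudoSpectrum (H : E →L[ℂ] E) (ε : ℝ) : Set ℂ :=
  {z : ℂ | lowerNorm H z ≤ ε}

theorem aux_four (a b c : E) (r : ℝ) :
    ‖a - (r:ℂ) • b + ((r:ℂ)^2) • c‖^2 + ‖a - (-r:ℂ) • b + ((-r:ℂ)^2) • c‖^2
     + ‖a - (r * Complex.I:ℂ) • b + ((r * Complex.I:ℂ)^2) • c‖^2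
     + ‖a - (-r * Complex.I:ℂ) • b + ((-r * Complex.I:ℂ)^2) • c‖^2
    = 4 * (‖a‖^2 + r^2 * ‖b‖^2 + r^4 * ‖c‖^2) := by
  have p := fun x y : E => parallelogram_law_with_norm ℂ x y
  have h1 := p (a + ((r:ℂ)^2) • c) ((r:ℂ) • b)
  have h2 := p (a - ((r:ℂ)^2) • c) ((r * Complex.I:ℂ) • b)
  have h3 := p a (((r:ℂ)^2) • c)
  have e1 : a - (r:ℂ) • b + ((r:ℂ)^2) • c = a + ((r:ℂ)^2) • c - (r:ℂ) • b := by module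
  have e2 : a - (-r:ℂ) • b + ((-r:ℂ)^2) • c = a + ((r:ℂ)^2) • c + (r:ℂ) • b := by module
  have e3 : a - (r * Complex.I:ℂ) • b + ((r * Complex.I:ℂ)^2) • c
      = a - ((r:ℂ)^2) • c - (r * Complex.I:ℂ) • b := by
    rw [mul_pow, Complex.I_sq]; module
  have e4 : a - (-r * Complex.I:ℂ) • b + ((-r * Complex.I:ℂ)^2) • c
      = a - ((r:ℂ)^2) • c + (r * Complex.I:ℂ) • b := by
    rw [mul_pow, Complex.I_sq]; module
  have n1 : ‖(r:ℂ) • b‖ * ‖(r:ℂ) • b‖ = r^2 * ‖b‖^2 := by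
    rw [norm_smul, Complex.norm_real, ← sq, mul_pow, Real.norm_eq_abs, sq_abs]
  have n2 : ‖(r * Complex.I:ℂ) • b‖ * ‖(r * Complex.I:ℂ) • b‖ = r^2 * ‖b‖^2 := by
    rw [norm_smul, norm_mul, Complex.norm_I, mul_one, Complex.norm_real, ← sq, mul_pow,
      Real.norm_eq_abs, sq_abs]
  have n3 : ‖((r:ℂ)^2) • c‖ * ‖((r:ℂ)^2) • c‖ = r^4 * ‖c‖^2 := by
    rw [norm_smul, norm_pow, Complex.norm_real, ← sq, mul_pow, Real.norm_eq_abs, sq_abs]; ring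
  rw [e1, e2, e3, e4]
  rw [← sq] at n1 n2 n3
  rw [n1] at h1
  rw [n2] at h2
  rw [n3] at h3
  linarith

/-- the resolvent norm has no local max -/
theorem aux_nomax [Nontrivial E] (H : E →L[ℂ] E) (z : ℂ) (δ M : ℝ) (hδ : 0 < δ)
    (hball : ∀ w, dist w z < δ → w ∉ spectrum ℂ H ∧ ‖resolvent H w‖ ≤ M)
    (hz : M ≤ ‖resolvent H z‖) : False := by
  have unit : ∀ w, w ∉ spectrum ℂ H → IsUnit (algebraMap ℂ (E →L[ℂ] E) w - H) := by
    intro w hw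
    exact spectrum.notMem_iff.mp hw
  obtain ⟨hz1, hz2⟩ := hball z (by simpa using hδ)
  set A := resolvent H z with hA
  have hAl : A * (algebraMap ℂ (E →L[ℂ] E) z - H) = 1 := Ring.inverse_mul_cancel _ (unit z hz1)
  have hM0 : 0 ≤ M := (norm_nonneg _).trans hz2
  set T := algebraMap ℂ (E →L[ℂ] E) z - H with hT
  have hTA : T * A = 1 := Ring.mul_inverse_cancel _ (unit z hz1)
  -- key estimate
  have key : ∀ h : ℂ, ‖h‖ < δ → ∀ u : E,
      ‖A u - h • A (A u) + h^2 • A (A (A u))‖ ≤ (M + ‖h‖^3 * M^4) * ‖u‖ := by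
    intro h hh u
    obtain ⟨hw1, hw2⟩ := hball (z + h) (by simpa using hh)
    set B := resolvent H (z + h) with hB
    have hBr : (algebraMap ℂ (E →L[ℂ] E) (z + h) - H) * B = 1 :=
      Ring.mul_inverse_cancel _ (unit _ hw1)
    have id0 : A = B + h • (A * B) := by
      have e : algebraMap ℂ (E →L[ℂ] E) (z + h) - H = T + h • (1 : E →L[ℂ] E) := by
        rw [hT, map_add, Algebra.algebraMap_eq_smul_one h]; abel
      rw [e] at hBr
      calc A = A * ((T + h • (1 : E →L[ℂ] E)) * B) := by rw [hBr, mul_one]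
        _ = (A * T) * B + h • (A * B) := by
          rw [add_mul, mul_add, mul_assoc]; simp
        _ = _ := by rw [hAl, one_mul]
    have id1 : ∀ v, A v = B v + h • A (B v) := fun v => by
      conv_lhs => rw [id0]
      rfl
    have id2 : A u - h • A (A u) + h^2 • A (A (A u)) = B u + h^3 • A (A (A (B u))) := by
      have e1 : A (A u) = A (B u) + h • A (A (B u)) := by
        conv_lhs => rw [id1 u]
        simp
      have e2 : A (A (A u)) = A (A (B u)) + h • A (A (A (B u))) := by
        rw [e1]; simp
      rw [e2, e1, id1 u]
      module
    rw [id2]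
    have bA : ∀ v, ‖A v‖ ≤ M * ‖v‖ := fun v => A.le_of_opNorm_le hz2 v
    have bB : ‖B u‖ ≤ M * ‖u‖ := B.le_of_opNorm_le hw2 u
    have b4 : ‖A (A (A (B u)))‖ ≤ M * (M * (M * (M * ‖u‖))) :=
      (bA _).trans (by gcongr; exact (bA _).trans (by gcongr; exact (bA _).trans (by gcongr)))
    calc _ ≤ ‖B u‖ + ‖h^3 • A (A (A (B u)))‖ := norm_add_le _ _
      _ = ‖B u‖ + ‖h‖^3 * ‖A (A (A (B u)))‖ := by rw [norm_smul, norm_pow]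
      _ ≤ M * ‖u‖ + ‖h‖^3 * (M * (M * (M * (M * ‖u‖)))) := by gcongr
      _ = _ := by ring
  -- lower bound
  set K := ‖T‖ + 1 with hK
  have hK0 : 0 < K := by positivity
  have low : ∀ v, ‖v‖ ≤ K * ‖A v‖ := fun v => by
    have : v = T (A v) := by
      have := congrArg (fun S : E →L[ℂ] E => S v) hTA
      simpa using this.symm
    calc ‖v‖ = ‖T (A v)‖ := by rw [← this]
      _ ≤ ‖T‖ * ‖A v‖ := T.le_opNorm _
      _ ≤ _ := by gcongr; linarith
  have low2 : ∀ v, ‖v‖ ≤ K^2 * ‖A (A v)‖ := fun v => by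
    calc ‖v‖ ≤ K * ‖A v‖ := low v
      _ ≤ K * (K * ‖A (A v)‖) := by gcongr; exact low _
      _ = _ := by ring
  have est : ∀ r : ℝ, 0 < r → r < δ → r^2 / K^4 ≤ 2 * r^3 * M^5 + r^6 * M^8 := by
    intro r hr hrδ
    by_contra! hcon
    have hb : ∀ u, ‖A u‖^2 ≤ ((M + r^3 * M^4)^2 - r^2 / K^4) * ‖u‖^2 := by
      intro u
      have f := aux_four (A u) (A (A u)) (A (A (A u))) r
      have nr : ‖(r:ℂ)‖ = r := by rw [Complex.norm_real, Real.norm_eq_abs, abs_of_pos hr]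
      have sqk : ∀ h : ℂ, ‖h‖ = r → ‖A u - h • A (A u) + h^2 • A (A (A u))‖^2
          ≤ ((M + r^3 * M^4) * ‖u‖)^2 := fun h hh => by
        have := key h (by rw [hh]; exact hrδ) u
        rw [hh] at this
        gcongr
      have g1 := sqk r nr
      have g2 := sqk (-r) (by rw [norm_neg, nr])
      have g3 := sqk (r * Complex.I) (by rw [norm_mul, nr, Complex.norm_I, mul_one])
      have g4 := sqk (-r * Complex.I) (by rw [norm_mul, norm_neg, nr, Complex.norm_I, mul_one])
      have l2 : r^2 / K^4 * ‖u‖^2 ≤ r^2 * ‖A (A u)‖^2 := by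
        rw [div_mul_eq_mul_div, div_le_iff₀ (by positivity), mul_assoc]
        gcongr
        calc ‖u‖^2 ≤ (K^2 * ‖A (A u)‖)^2 := by gcongr; exact low2 u
          _ = _ := by ring
      have : 0 ≤ r^4 * ‖A (A (A u))‖^2 := by positivity
      nlinarith
    have hC : (M + r^3 * M^4)^2 - r^2 / K^4 < M^2 := by nlinarith
    set C := (M + r^3 * M^4)^2 - r^2 / K^4 with hCdef
    have hC0 : 0 ≤ C := by
      obtain ⟨u, hu⟩ := exists_ne (0 : E)
      have := hb u
      have hu2 : 0 < ‖u‖^2 := by positivity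
      by_contra! hneg
      nlinarith [sq_nonneg ‖A u‖]
    have : ‖A‖ ≤ Real.sqrt C := by
      refine A.opNorm_le_bound (Real.sqrt_nonneg _) fun u => ?_
      refine le_of_sq_le_sq ?_ (by positivity)
      rw [mul_pow, Real.sq_sqrt hC0]
      exact hb u
    have h2 : Real.sqrt C < M := (Real.sqrt_lt' (by
      rcases hM0.lt_or_eq with h | h
      · exact h
      · exfalso; rw [← h] at hC; norm_num at hC; linarith)).mpr hC
    linarith
  -- contradiction for small r
  have lim : Filter.Tendsto (fun r : ℝ => 2 * r * M^5 + r^4 * M^8) (nhdsWithin 0 (Set.Ioi 0))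
      (nhds 0) := by
    have : Continuous (fun r : ℝ => 2 * r * M^5 + r^4 * M^8) := by fun_prop
    have h := (this.tendsto 0).mono_left (nhdsWithin_le_nhds (s := Set.Ioi (0:ℝ)))
    simpa using h
  have ev := (lim.eventually (gt_mem_nhds (show (0:ℝ) < 1 / K^4 by positivity))).and
    (Ioo_mem_nhdsGT hδ : ∀ᶠ r in nhdsWithin (0:ℝ) (Set.Ioi 0), r ∈ Set.Ioo 0 δ)
  obtain ⟨r, hr1, hr2, hr3⟩ := ev.exists
  have h1 := est r hr2 hr3
  have h2 : r^2 * (2 * r * M^5 + r^4 * M^8) < r^2 * (1 / K^4) := by gcongr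
  have h3 : r^2 * (1 / K^4) = r^2 / K^4 := by ring
  nlinarith

theorem aux_pos [Nontrivial E] (H : E →L[ℂ] E) (z : ℂ) (hz : z ∉ spectrum ℂ H) :
    0 < ‖resolvent H z‖ := by
  rw [norm_pos_iff]
  intro h
  have := Ring.mul_inverse_cancel _ (spectrum.notMem_iff.mp hz)
  change _ * resolvent H z = 1 at this
  rw [h, mul_zero] at this
  exact zero_ne_one this

theorem aux_ln (H : E →L[ℂ] E) (z : ℂ) (hz : z ∉ spectrum ℂ H) :
    lowerNorm H z = ‖resolvent H z‖⁻¹ := by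
  simp only [lowerNorm, if_neg hz]; rfl

theorem aux_bdd [Nontrivial E] (H : E →L[ℂ] E) (ε : ℝ) (hε : 0 < ε) :
    Bornology.IsBounded (pseudoSpectrum H ε) := by
  have h1 := spectrum.resolvent_tendsto_cobounded (𝕜 := ℂ) H
  have h2 : ∀ᶠ w in Bornology.cobounded ℂ, ‖resolvent H w‖ < ε⁻¹ :=
    h1.norm.eventually (gt_mem_nhds (by simpa using hε))
  have h3 : ∀ᶠ w in Bornology.cobounded ℂ, w ∉ spectrum ℂ H :=
    (spectrum.isBounded H : Bornology.IsBounded (spectrum ℂ H))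
  rw [Bornology.isBounded_def]
  filter_upwards [h2, h3] with w hw hs
  simp only [pseudoSpectrum, Set.mem_compl_iff, Set.mem_setOf_eq, not_le]
  rw [aux_ln H w hs]
  exact (lt_inv_comm₀ (aux_pos H w hs) hε).mp hw

theorem pseudospectrum_level_continuity [Nontrivial E] (H : E →L[ℂ] E)
    (ε : ℝ) (hε : 0 < ε) (δ : ℝ) (hδ : 0 < δ) :
    ∃ τ : ℝ, 0 < τ ∧ τ < ε ∧
      Metric.hausdorffDist (pseudoSpectrum H (ε - τ)) (pseudoSpectrum H (ε + τ)) ≤ δ := by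
  by_contra! hcon
  have hex : ∀ τ : ℝ, 0 < τ → τ < ε → ∃ z ∈ pseudoSpectrum H (ε + τ),
      ∀ y ∈ pseudoSpectrum H (ε - τ), δ < dist z y := by
    intro τ h0 h1
    by_contra! hc
    refine absurd (hcon τ h0 h1) (not_lt.mpr ?_)
    refine Metric.hausdorffDist_le_of_mem_dist hδ.le ?_ hc
    intro x hx
    refine ⟨x, ?_, by simpa using hδ.le⟩
    have : lowerNorm H x ≤ ε - τ := hx
    change lowerNorm H x ≤ ε + τ
    linarith
  let τ : ℕ → ℝ := fun n => ε / ((n:ℝ) + 2)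
  have hτ0 : ∀ n, 0 < τ n := fun n => by positivity
  have hτ1 : ∀ n, τ n < ε := fun n => div_lt_self hε (by linarith [(Nat.cast_nonneg n : (0:ℝ) ≤ n)])
  have hτ : Filter.Tendsto τ Filter.atTop (nhds 0) :=
    Filter.Tendsto.const_div_atTop
      (Filter.tendsto_atTop_add_const_right _ _ tendsto_natCast_atTop_atTop) _
  choose zs hz1 hz2 using fun n => hex (τ n) (hτ0 n) (hτ1 n)
  have hmem : ∀ n, zs n ∈ pseudoSpectrum H (2 * ε) := fun n => by
    have : lowerNorm H (zs n) ≤ ε + τ n := hz1 n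
    change lowerNorm H (zs n) ≤ 2 * ε
    linarith [hτ1 n]
  obtain ⟨z, -, φ, hφ, hlim⟩ := tendsto_subseq_of_bounded (aux_bdd H (2 * ε) (by positivity)) hmem
  have hτφ := hτ.comp hφ.tendsto_atTop
  have hge : ∀ w, dist w z < δ → ε ≤ lowerNorm H w := by
    intro w hw
    by_contra! hlt
    have ev : ∀ᶠ n in Filter.atTop, (τ ∘ φ) n < ε - lowerNorm H w :=
      hτφ.eventually (gt_mem_nhds (by linarith))
    have : δ ≤ dist z w := by
      refine ge_of_tendsto (hlim.dist tendsto_const_nhds) ?_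
      filter_upwards [ev] with n hn
      refine (hz2 (φ n) w ?_).le
      change lowerNorm H w ≤ ε - τ (φ n)
      simp only [Function.comp] at hn
      linarith
    rw [dist_comm] at this
    linarith
  have hns : ∀ w, dist w z < δ → w ∉ spectrum ℂ H := by
    intro w hw hs
    have := hge w hw
    simp only [lowerNorm, if_pos hs] at this
    linarith
  have hzs := hns z (by simpa using hδ)
  refine aux_nomax H z δ ε⁻¹ hδ (fun w hw => ⟨hns w hw, ?_⟩) ?_
  · have := hge w hw
    rw [aux_ln H w (hns w hw)] at this
    exact (le_inv_comm₀ hε (aux_pos H w (hns w hw))).mp this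
  · have cont : ContinuousAt (resolvent H) z :=
      (spectrum.hasDerivAt_resolvent (spectrum.notMem_iff.mp hzs)).continuousAt
    have l1 : Filter.Tendsto (fun n => ‖resolvent H (zs (φ n))‖⁻¹) Filter.atTop
        (nhds ‖resolvent H z‖⁻¹) :=
      ((cont.tendsto.comp hlim).norm).inv₀ (aux_pos H z hzs).ne'
    have l2 : Filter.Tendsto (fun n => ε + τ (φ n)) Filter.atTop (nhds (ε + 0)) :=
      tendsto_const_nhds.add hτφ
    have ev : ∀ᶠ n in Filter.atTop, dist (zs (φ n)) z < δ :=
      hlim.eventually (Metric.ball_mem_nhds z hδ)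
    have : ‖resolvent H z‖⁻¹ ≤ ε + 0 := by
      refine le_of_tendsto_of_tendsto l1 l2 ?_
      filter_upwards [ev] with n hn
      rw [← aux_ln H _ (hns _ hn)]
      exact hz1 (φ n)
    rw [add_zero] at this
    exact (inv_le_comm₀ (aux_pos H z hzs) hε).mp this
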